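/- arXiv:2605.20895 — 3 statements merged into one kernel-verified Lean document; each statement's English description precedes it below -/
import Mathlib

section
/- Let σ > 1 and let f: ℝ → ℝ be 1-periodic and α-Hölder continuous for some 0 < α ≤ 1. Then there exist constants A, A* > 0 depending only on σ, f, α such that for all positive integers i, n, k with k < n − μ_i: (1) | (1/F_n^σ) · f(W_{i,k}/F_n)/sin(πW_{i,k}/F_n)^σ · f(W*_{i,n−k}/F_n)/sin(πW*_{i,n−k}/F_n)^σ − f(0)/(π^σ W_{i,k}^σ) · f(w_+*(i)φ^{−k})/sin(π w_+*(i) φ^{−k})^σ | ≤ A / (φ^{α(n−k)} i^{σ−α}), and (2) | (1/F_n^σ) · f(W_{i,k}/F_n)/sin(πW_{i,k}/F_n)^σ · f(W*_{i,n−k}/F_n)/sin(πW*_{i,n−k}/F_n)^σ − f(w_+(i)φ^{−(n−k)})/sin(π w_+(i) φ^{−(n−k)})^σ · f(0)/(π^σ (W*_{i,n−k})^σ) | ≤ A* / (φ^{αk} i^{σ−α}). -/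
open Real

noncomputable def phi : ℝ := (1 + Real.sqrt 5) / 2

noncomputable def W (i : ℕ) : ℕ → ℤ
  | 0 => ⌊phi ^ 2 * (⌊phi * i⌋ : ℝ)⌋ - ⌊phi * (⌊phi * i⌋ : ℝ)⌋
  | 1 => ⌊phi * (⌊phi * i⌋ : ℝ)⌋
  | 2 => ⌊phi ^ 2 * (⌊phi * i⌋ : ℝ)⌋
  | (k + 3) => W i (k + 2) + W i (k + 1)

noncomputable def wplus (i : ℕ) : ℝ := phi⁻¹ ^ 2 * (W i 1 : ℝ) + phi⁻¹ * (W i 2 : ℝ)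

noncomputable def wminus (i : ℕ) : ℝ := phi ^ 2 * (W i 1 : ℝ) - phi * (W i 2 : ℝ)

noncomputable def eta (i : ℕ) : ℝ := -(wplus i * wminus i)


noncomputable def mu (i : ℕ) : ℕ := sInf {m : ℕ | 0 < m ∧ 2 * W i 1 < (Nat.fib (m + 2) : ℤ)}

noncomputable def Wstar (i n k : ℕ) : ℤ :=
  (-1) ^ k * ((Nat.fib (n - 1) : ℤ) * W i k - (Nat.fib n : ℤ) * W i (k - 1))


lemma aq_phi_sq : phi ^ 2 = phi + 1 := by
  unfold phi
  have := Real.sq_sqrt (show (0:ℝ) ≤ 5 by norm_num)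
  nlinarith

lemma aq_phi_lb : 1.618 < phi := by
  unfold phi
  have : (2.236 : ℝ) < Real.sqrt 5 := by
    apply Real.lt_sqrt_of_sq_lt; norm_num
  linarith

lemma aq_phi_ub : phi < 1.6181 := by
  unfold phi
  have : Real.sqrt 5 < (2.2362 : ℝ) := by
    rw [Real.sqrt_lt' (by norm_num)]; norm_num
  linarith

lemma aq_phi_irr : Irrational phi := Real.goldenRatio_irrational

lemma aq_inv : phi⁻¹ = phi - 1 := by
  have h := aq_phi_sq
  have h1 := aq_phi_lb
  have : phi ≠ 0 := by linarith
  field_simp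
  linarith

lemma aq_W1 (i : ℕ) (hi : 0 < i) :
    ∃ j : ℤ, 1 ≤ j ∧ (j : ℝ) ≤ phi * i ∧ W i 0 = j ∧ W i 1 = i + j - 1 ∧ W i 2 = i + 2 * j - 1 ∧
      phi * i - j < 1 := by
  have h := aq_phi_sq
  have h1 := aq_phi_lb
  have h2 := aq_phi_ub
  have hi' : (1 : ℝ) ≤ i := by exact_mod_cast hi
  set j : ℤ := ⌊phi * i⌋ with hj
  have hj1 : (j : ℝ) ≤ phi * i := Int.floor_le _
  have hj2 : phi * i < j + 1 := Int.lt_floor_add_one _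
  have hj3 : (j : ℝ) ≠ phi * i := by
    intro hh
    have : Irrational (phi * i) := aq_phi_irr.mul_natCast (by omega)
    exact this ⟨(j : ℚ), by rw [← hh]; norm_cast⟩
  have hj4 : (j : ℝ) < phi * i := lt_of_le_of_ne hj1 hj3
  have hjp : 1 ≤ j := by
    rw [hj, Int.le_floor]; push_cast; nlinarith
  have e1 : ⌊phi * (j : ℝ)⌋ = i + j - 1 := by
    rw [Int.floor_eq_iff]; push_cast
    constructor <;> nlinarith
  have e2 : ⌊phi ^ 2 * (j : ℝ)⌋ = i + 2 * j - 1 := by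
    have : phi ^ 2 * (j : ℝ) = phi * j + (j : ℤ) := by rw [h]; ring
    rw [this, Int.floor_add_intCast, e1]; ring
  refine ⟨j, hjp, hj1, ?_, ?_, ?_, by linarith⟩
  · simp only [W]; rw [← hj, e1, e2]; ring
  · simp only [W]; rw [← hj, e1]
  · simp only [W]; rw [← hj, e2]

/-- basic data of the row -/
lemma aq_row (i : ℕ) (hi : 0 < i) :
    0.38 < -wminus i ∧ -wminus i ≤ 1 ∧ (i : ℝ) ≤ wplus i ∧ wplus i ≤ 5 * i ∧
    1 ≤ W i 1 ∧ wplus i * phi = (2 * phi - 1) * W i 1 + (-wminus i) * (phi - 1) ∧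
    wplus i = W i 1 + (phi - 1) * W i 0 ∧ -wminus i = phi * W i 0 - W i 1 := by
  have h := aq_phi_sq
  have h1 := aq_phi_lb
  have h2 := aq_phi_ub
  have hi' : (1 : ℝ) ≤ i := by exact_mod_cast hi
  obtain ⟨j, hj1, hj2, e0, e1, e2, hj3⟩ := aq_W1 i hi
  have hj1' : (1 : ℝ) ≤ j := by exact_mod_cast hj1
  have hp : wplus i = W i 1 + (phi - 1) * W i 0 := by
    unfold wplus; rw [aq_inv, e0, e1, e2]; push_cast; linear_combination (i + j - 1 : ℝ) * h
  have hm : -wminus i = phi * W i 0 - W i 1 := by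
    unfold wminus; rw [e0, e1, e2]; push_cast; linear_combination -(i + j - 1 : ℝ) * h
  refine ⟨?_, ?_, ?_, ?_, ?_, ?_, hp, hm⟩
  · rw [hm, e0, e1]; push_cast; nlinarith
  · rw [hm, e0, e1]; push_cast; nlinarith
  · rw [hp, e0, e1]; push_cast; nlinarith
  · rw [hp, e0, e1]; push_cast; nlinarith
  · rw [e1]; omega
  · rw [hp, hm, e0, e1]; push_cast; ring

lemma aq_W_rec (i : ℕ) (k : ℕ) : W i (k + 2) = W i (k + 1) + W i k := by
  cases k with
  | zero => simp [W]
  | succ k => rfl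

lemma aq_W_closed (i : ℕ) (hi : 0 < i) (k : ℕ) :
    (2 * phi - 1) * (W i k : ℝ) = wplus i * phi ^ k + (-wminus i) * (1 - phi) ^ k := by
  have h := aq_phi_sq
  obtain ⟨-, -, -, -, -, -, hp, hm⟩ := aq_row i hi
  rw [hp, hm]
  induction k using Nat.twoStepInduction with
  | zero => ring
  | one => linear_combination (-(2 * W i 0) + 2 * W i 0 : ℝ) * h
  | more k ih1 ih2 =>
    rw [aq_W_rec]; push_cast
    have e1 : phi ^ (k + 2) = phi ^ (k + 1) + phi ^ k := by
      rw [pow_add, h]; ring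
    have e2 : (1 - phi) ^ (k + 2) = (1 - phi) ^ (k + 1) + (1 - phi) ^ k := by
      have : (1 - phi) ^ 2 = (1 - phi) + 1 := by linear_combination h
      rw [pow_add, this]; ring
    rw [mul_add, ih1, ih2, e1, e2]; ring

lemma aq_fib_closed (n : ℕ) :
    (2 * phi - 1) * (Nat.fib n : ℝ) = phi ^ n - (1 - phi) ^ n := by
  have h := aq_phi_sq
  induction n using Nat.twoStepInduction with
  | zero => simp
  | one => simp; ring
  | more k ih1 ih2 =>
    rw [Nat.fib_add_two]; push_cast
    have e1 : phi ^ (k + 2) = phi ^ (k + 1) + phi ^ k := by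
      rw [pow_add, h]; ring
    have e2 : (1 - phi) ^ (k + 2) = (1 - phi) ^ (k + 1) + (1 - phi) ^ k := by
      have : (1 - phi) ^ 2 = (1 - phi) + 1 := by linear_combination h
      rw [pow_add, this]; ring
    rw [mul_add, ih1, ih2, e1, e2]; ring

lemma aq_psi (k : ℕ) : (1 - phi) ^ k = (-1) ^ k * (phi ^ k)⁻¹ := by
  have : 1 - phi = (-1) * phi⁻¹ := by rw [aq_inv]; ring
  rw [this, mul_pow, inv_pow]

lemma aq_Wstar_closed (i : ℕ) (hi : 0 < i) (k N : ℕ) (hk : 0 < k) :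
    (2 * phi - 1) * (Wstar i (k + N) k : ℝ)
      = (-wminus i) * phi ^ N + wplus i * (1 - phi) ^ N := by
  have h1 := aq_phi_lb
  obtain ⟨k, rfl⟩ : ∃ m, k = m + 1 := ⟨k - 1, by omega⟩
  have c1 := aq_W_closed i hi (k + 1)
  have c0 := aq_W_closed i hi k
  have f1 := aq_fib_closed (k + 1 + N)
  have f0 := aq_fib_closed (k + N)
  unfold Wstar
  have en : k + 1 + N - 1 = k + N := by omega
  rw [en, Nat.add_sub_cancel]
  push_cast
  have hne : (2 * phi - 1) ≠ 0 := by linarith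
  apply mul_left_cancel₀ hne
  have key : (2 * phi - 1) * ((2 * phi - 1) * ((-1) ^ (k + 1) *
      ((Nat.fib (k + N) : ℝ) * W i (k + 1) - Nat.fib (k + 1 + N) * W i k)))
      = (-1) ^ (k + 1) * (((2 * phi - 1) * Nat.fib (k + N)) * ((2 * phi - 1) * W i (k + 1))
        - ((2 * phi - 1) * Nat.fib (k + 1 + N)) * ((2 * phi - 1) * W i k)) := by ring
  rw [key, c1, c0, f1, f0]
  have hab : phi ^ k * (1 - phi) ^ k = (-1) ^ k := by
    rw [← mul_pow]; congr 1; linear_combination -aq_phi_sq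
  have hs : ((-1 : ℝ) ^ k) * (-1) ^ k = 1 := by
    rw [← mul_pow]; norm_num
  have hz : (-1 : ℝ) ^ (k + 1) * (phi ^ k * (1 - phi) ^ k) = -1 := by
    rw [hab, pow_succ]; linear_combination -hs
  linear_combination (-(2 * phi - 1) * ((-wminus i) * phi ^ N + wplus i * (1 - phi) ^ N)) * hz

lemma aq_mu (i : ℕ) (hi : 0 < i) (N : ℕ) (hN : mu i < N) :
    3 ≤ N ∧ wplus i ≤ phi ^ N / 2 := by
  have h := aq_phi_sq
  have h1 := aq_phi_lb
  have h2 := aq_phi_ub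
  obtain ⟨hs0, hs1, -, -, hW, hpp, -, -⟩ := aq_row i hi
  have hmem : mu i ∈ {m : ℕ | 0 < m ∧ 2 * W i 1 < (Nat.fib (m + 2) : ℤ)} := by
    apply Nat.sInf_mem
    refine ⟨(2 * W i 1).toNat + 4, by omega, ?_⟩
    have := Nat.le_fib_self (n := (2 * W i 1).toNat + 4 + 2) (by omega)
    omega
  obtain ⟨hm0, hm⟩ := hmem
  have hm2 : 2 ≤ mu i := by
    by_contra hc
    have : mu i = 1 := by omega
    rw [this] at hm
    norm_num [Nat.fib] at hm
    omega
  have hN3 : 3 ≤ N := by omega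
  refine ⟨hN3, ?_⟩
  have hmono : Nat.fib (mu i + 2) ≤ Nat.fib (N + 1) := Nat.fib_mono (by omega)
  have hF : 2 * W i 1 + 1 ≤ (Nat.fib (N + 1) : ℤ) := by omega
  have hF' : 2 * (W i 1 : ℝ) + 1 ≤ Nat.fib (N + 1) := by exact_mod_cast hF
  have hc := aq_fib_closed (N + 1)
  have hsmall : |(1 - phi) ^ (N + 1)| ≤ 0.2 := by
    rw [abs_pow]
    have a1 : |1 - phi| ≤ 0.6181 := by rw [abs_le]; constructor <;> linarith
    calc |1 - phi| ^ (N + 1) ≤ 0.6181 ^ (N + 1) := by gcongr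
      _ ≤ 0.6181 ^ 4 := pow_le_pow_of_le_one (by norm_num) (by norm_num) (by omega)
      _ ≤ 0.2 := by norm_num
  have := abs_le.1 hsmall
  have e : phi ^ (N + 1) = phi ^ N * phi := pow_succ _ _
  have : wplus i * phi ≤ (phi ^ N / 2) * phi := by
    have q1 : (2 * phi - 1) * (2 * (W i 1 : ℝ) + 1) ≤ (2 * phi - 1) * Nat.fib (N + 1) := by
      apply mul_le_mul_of_nonneg_left hF'; linarith
    have q2 : -wminus i * (phi - 1) ≤ 1 * (phi - 1) := by
      apply mul_le_mul_of_nonneg_right hs1; linarith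
    nlinarith
  exact le_of_mul_le_mul_right this (by linarith)

lemma aq_pow_diff (σ : ℝ) (hσ : 1 < σ) (B a b : ℝ) (ha : 0 ≤ a) (hb : 0 ≤ b)
    (haB : a ≤ B) (hbB : b ≤ B) : |a ^ σ - b ^ σ| ≤ σ * B ^ (σ - 1) * |a - b| := by
  have := Convex.norm_image_sub_le_of_norm_hasDerivWithin_le (f := fun x : ℝ => x ^ σ)
    (f' := fun x => σ * x ^ (σ - 1)) (s := Set.Icc 0 B) (x := b) (y := a)
    (C := σ * B ^ (σ - 1)) ?_ ?_ (convex_Icc _ _) ⟨hb, hbB⟩ ⟨ha, haB⟩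
  · simpa [Real.norm_eq_abs] using this
  · intro x hx
    exact (Real.hasDerivAt_rpow_const (Or.inr hσ.le)).hasDerivWithinAt
  · intro x hx
    have h0 : 0 ≤ x ^ (σ - 1) := Real.rpow_nonneg hx.1 _
    rw [Real.norm_eq_abs, abs_of_nonneg (by positivity)]
    have : x ^ (σ - 1) ≤ B ^ (σ - 1) := Real.rpow_le_rpow hx.1 hx.2 (by linarith)
    gcongr

lemma aq_sin_lb (x : ℝ) (hx : 0 < x) (hx2 : x ≤ 3 / 4) : x / 2 ≤ Real.sin (π * x) := by
  have hpi := Real.pi_pos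
  rcases le_total x (1/2) with h | h
  · have := Real.mul_le_sin (x := π * x) (by positivity) (by nlinarith)
    have e : 2 / π * (π * x) = 2 * x := by field_simp
    linarith
  · have := Real.mul_le_sin (x := π * (1 - x)) (by apply mul_nonneg <;> linarith) (by nlinarith)
    have e : 2 / π * (π * (1 - x)) = 2 * (1 - x) := by field_simp
    have e2 : Real.sin (π * (1 - x)) = Real.sin (π * x) := by
      rw [← Real.sin_pi_sub]; congr 1; ring
    linarith

lemma aq_sub_sin (t : ℝ) (ht : 0 < t) (ht2 : t ≤ π) : t - Real.sin t ≤ t ^ 2 := by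
  rcases le_total t 1 with h | h
  · have := Real.sin_gt_sub_cube ht
    have h3 : t ^ 3 ≤ t ^ 2 := pow_le_pow_of_le_one ht.le h (by norm_num)
    nlinarith [sq_nonneg t]
  · have := Real.sin_nonneg_of_nonneg_of_le_pi ht.le ht2
    nlinarith

lemma aq_prod (B p1 p2 p3 p4 q1 q2 q3 q4 : ℝ)
    (h1 : |p1| ≤ B) (h2 : |p2| ≤ B) (h3 : |p3| ≤ B) (h4 : |p4| ≤ B)
    (k1 : |q1| ≤ B) (k2 : |q2| ≤ B) (k3 : |q3| ≤ B) :
    |p1 * p2 * p3 * p4 - q1 * q2 * q3 * q4|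
      ≤ B ^ 3 * (|p1 - q1| + |p2 - q2| + |p3 - q3| + |p4 - q4|) := by
  have hB : 0 ≤ B := (abs_nonneg _).trans h1
  have e : p1 * p2 * p3 * p4 - q1 * q2 * q3 * q4
    = (p1 - q1) * (p2 * p3 * p4) + (p2 - q2) * (q1 * p3 * p4) + (p3 - q3) * (q1 * q2 * p4)
      + (p4 - q4) * (q1 * q2 * q3) := by ring
  have t : ∀ d a b c : ℝ, |a| ≤ B → |b| ≤ B → |c| ≤ B → |d * (a * b * c)| ≤ B ^ 3 * |d| := by
    intro d a b c ha hb hc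
    rw [abs_mul, abs_mul, abs_mul, mul_comm]
    have : |a| * |b| * |c| ≤ B * B * B := by gcongr
    have e : B ^ 3 = B * B * B := by ring
    rw [e]; gcongr
  rw [e]
  have t1 := t (p1 - q1) _ _ _ h2 h3 h4
  have t2 := t (p2 - q2) _ _ _ k1 h3 h4
  have t3 := t (p3 - q3) _ _ _ k1 k2 h4
  have t4 := t (p4 - q4) _ _ _ k1 k2 k3
  refine (abs_add_le _ _).trans ?_
  refine (add_le_add_left (abs_add_le _ _) _).trans ?_
  refine (add_le_add_left (add_le_add_left (abs_add_le _ _) _) _).trans ?_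
  linarith

lemma aq_core (σ : ℝ) (hσ : 1 < σ) (f : ℝ → ℝ)
    (α : ℝ) (hα0 : 0 < α) (hα1 : α ≤ 1)
    (hHolder : ∃ L : ℝ, 0 ≤ L ∧ ∀ x ∈ Set.Ico (0 : ℝ) 1, ∀ y ∈ Set.Ico (0 : ℝ) 1,
      |f x - f y| ≤ L * |x - y| ^ α) (D : ℝ) (hD : 0 ≤ D) :
    ∃ C : ℝ, 0 < C ∧ ∀ x y z : ℝ, 0 < x → x ≤ 3 / 4 → 0 < y → y ≤ 3 / 4 → 0 < z → z ≤ 3 / 4 →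
      y ≤ 4 * z → |y - z| ≤ D * (x * y) →
      |f x * (x / Real.sin (π * x)) ^ σ * f y * (y / Real.sin (π * y)) ^ σ
        - f 0 * (1 / π) ^ σ * f z * (y / Real.sin (π * z)) ^ σ| ≤ C * x ^ α := by
  obtain ⟨L, hL, hH⟩ := hHolder
  have hpi := Real.pi_pos
  have hpi3 := Real.pi_gt_three
  set B : ℝ := |f 0| + L + 8 ^ σ with hB
  have h8 : (0:ℝ) < 8 ^ σ := by positivity
  have hB0 : 0 < B := by positivity
  have hfB : ∀ x, 0 < x → x ≤ 3 / 4 → |f x| ≤ B := by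
    intro x hx hx2
    have a := hH x ⟨hx.le, by linarith⟩ 0 ⟨le_rfl, by norm_num⟩
    have b : |x - 0| ^ α ≤ 1 := by
      apply Real.rpow_le_one (abs_nonneg _) _ hα0.le
      rw [sub_zero, abs_of_pos hx]; linarith
    have c : L * |x - 0| ^ α ≤ L := by nlinarith
    have d : |f x| ≤ |f x - f 0| + |f 0| := by
      have := abs_add_le (f x - f 0) (f 0); simpa using this
    linarith
  have hpB : ∀ u : ℝ, 0 ≤ u → u ≤ 8 → |u ^ σ| ≤ B := by
    intro u hu hu2
    rw [abs_of_nonneg (Real.rpow_nonneg hu _)]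
    have : u ^ σ ≤ 8 ^ σ := Real.rpow_le_rpow hu hu2 (by linarith)
    have := abs_nonneg (f 0)
    linarith
  set K : ℝ := σ * 8 ^ (σ - 1) with hK
  have hK0 : 0 < K := by have : (0:ℝ) < 8 ^ (σ-1) := by positivity
                         positivity
  refine ⟨B ^ 3 * (L + K * (2 * π) + L * D ^ α + K * (16 * π * D)) + 1, by positivity, ?_⟩
  intro x y z hx hx2 hy hy2 hz hz2 hyz hd
  have sx := aq_sin_lb x hx hx2
  have sy := aq_sin_lb y hy hy2
  have sz := aq_sin_lb z hz hz2
  have px : 0 < Real.sin (π * x) := by linarith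
  have py : 0 < Real.sin (π * y) := by linarith
  have pz : 0 < Real.sin (π * z) := by linarith
  have gx : x / Real.sin (π * x) ≤ 8 := by rw [div_le_iff₀ px]; linarith
  have gy : y / Real.sin (π * y) ≤ 8 := by rw [div_le_iff₀ py]; linarith
  have gz : y / Real.sin (π * z) ≤ 8 := by rw [div_le_iff₀ pz]; linarith
  have hpi8 : 1 / π ≤ 8 := by rw [div_le_iff₀ hpi]; linarith
  have hxα : x ≤ x ^ α := by
    have := Real.rpow_le_rpow_of_exponent_ge hx (by linarith) hα1
    simpa using this
  have hxα0 : 0 < x ^ α := Real.rpow_pos_of_pos hx _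
  have hxy : 0 < x * y := by positivity
  refine (aq_prod B _ _ _ _ _ _ _ _ (hfB x hx hx2) (hpB _ (by positivity) gx) (hfB y hy hy2)
    (hpB _ (by positivity) gy) (by have := abs_nonneg (f 0); linarith)
    (hpB _ (by positivity) hpi8) (hfB z hz hz2)).trans ?_
  have t1 : |f x - f 0| ≤ L * x ^ α := by
    have a := hH x ⟨hx.le, by linarith⟩ 0 ⟨le_rfl, by norm_num⟩
    rwa [sub_zero, abs_of_pos hx] at a
  have t2 : |(x / Real.sin (π * x)) ^ σ - (1 / π) ^ σ| ≤ K * (2 * π) * x ^ α := by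
    refine (aq_pow_diff σ hσ 8 _ _ (by positivity) (by positivity) gx hpi8).trans ?_
    rw [← hK, mul_assoc K]
    apply mul_le_mul_of_nonneg_left _ hK0.le
    have e : x / Real.sin (π * x) - 1 / π
        = (π * x - Real.sin (π * x)) / (π * Real.sin (π * x)) := by
      rw [div_sub_div _ _ px.ne' hpi.ne']; congr 1 <;> ring
    have hle := Real.sin_le (x := π * x) (by positivity)
    rw [e, abs_of_nonneg (div_nonneg (by linarith) (by positivity)), div_le_iff₀ (by positivity)]
    have q := aq_sub_sin (π * x) (by positivity) (by nlinarith)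
    calc π * x - Real.sin (π * x) ≤ (π * x) ^ 2 := q
      _ = 2 * π * x * (π * (x / 2)) := by ring
      _ ≤ 2 * π * x ^ α * (π * Real.sin (π * x)) := by gcongr
  have t3 : |f y - f z| ≤ L * D ^ α * x ^ α := by
    refine (hH y ⟨hy.le, by linarith⟩ z ⟨hz.le, by linarith⟩).trans ?_
    rw [mul_assoc, ← Real.mul_rpow hD hx.le]
    apply mul_le_mul_of_nonneg_left _ hL
    apply Real.rpow_le_rpow (abs_nonneg _) _ hα0.le
    refine hd.trans ?_
    apply mul_le_mul_of_nonneg_left _ hD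
    nlinarith
  have t4 : |(y / Real.sin (π * y)) ^ σ - (y / Real.sin (π * z)) ^ σ|
      ≤ K * (16 * π * D) * x ^ α := by
    refine (aq_pow_diff σ hσ 8 _ _ (by positivity) (by positivity) gy gz).trans ?_
    rw [← hK, mul_assoc K]
    apply mul_le_mul_of_nonneg_left _ hK0.le
    have e : y / Real.sin (π * y) - y / Real.sin (π * z)
        = y * (Real.sin (π * z) - Real.sin (π * y)) / (Real.sin (π * y) * Real.sin (π * z)) := by
      rw [div_sub_div _ _ py.ne' pz.ne']; congr 1; ring
    have hlip : |Real.sin (π * z) - Real.sin (π * y)| ≤ π * (D * (x * y)) := by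
      have : |Real.sin (π * z) - Real.sin (π * y)| ≤ |π * z - π * y| :=
        Real.abs_sin_sub_sin_le _ _
      refine this.trans ?_
      rw [← mul_sub, abs_mul, abs_of_pos hpi, abs_sub_comm]
      gcongr
    rw [e, abs_div, abs_mul, abs_of_pos hy, abs_of_pos (mul_pos py pz),
      div_le_iff₀ (by positivity)]
    calc y * |Real.sin (π * z) - Real.sin (π * y)| ≤ y * (π * (D * (x * y))) := by gcongr
      _ = 16 * π * D * x * ((y / 2) * (y / 8)) := by ring
      _ ≤ 16 * π * D * x ^ α * (Real.sin (π * y) * Real.sin (π * z)) := by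
        gcongr
        linarith
  calc _ ≤ B ^ 3 * (L * x ^ α + K * (2 * π) * x ^ α + L * D ^ α * x ^ α
        + K * (16 * π * D) * x ^ α) := by gcongr
    _ = (B ^ 3 * (L + K * (2 * π) + L * D ^ α + K * (16 * π * D))) * x ^ α := by ring
    _ ≤ _ := by gcongr; linarith

lemma aq_term (σ : ℝ) (hσ : 1 < σ) (f : ℝ → ℝ)
    (α : ℝ) (hα0 : 0 < α) (hα1 : α ≤ 1)
    (hHolder : ∃ L : ℝ, 0 ≤ L ∧ ∀ x ∈ Set.Ico (0 : ℝ) 1, ∀ y ∈ Set.Ico (0 : ℝ) 1,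
      |f x - f y| ≤ L * |x - y| ^ α) (D : ℝ) (hD : 0 ≤ D) :
    ∃ C : ℝ, 0 < C ∧ ∀ F w v z : ℝ, 0 < F → 0 < w → 0 < v → 0 < z →
      w / F ≤ 3 / 4 → v / F ≤ 3 / 4 → z ≤ 3 / 4 →
      v / F ≤ 4 * z → |v / F - z| ≤ D * (w / F * (v / F)) →
      |1 / F ^ σ * (f (w / F) / Real.sin (π * w / F) ^ σ) *
          (f (v / F) / Real.sin (π * v / F) ^ σ)
        - f 0 / (π ^ σ * w ^ σ) * (f z / Real.sin (π * z) ^ σ)|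
        ≤ C * (w / F) ^ α / (w * v / F) ^ σ := by
  obtain ⟨C, hC, h⟩ := aq_core σ hσ f α hα0 hα1 hHolder D hD
  refine ⟨C, hC, ?_⟩
  intro F w v z hF hw hv hz hx hy hz2 hyz hd
  have hx0 : 0 < w / F := by positivity
  have hy0 : 0 < v / F := by positivity
  have hh := h (w / F) (v / F) z hx0 hx hy0 hy hz hz2 hyz hd
  have hpi := Real.pi_pos
  have px : 0 < Real.sin (π * (w / F)) := by have := aq_sin_lb _ hx0 hx; linarith
  have py : 0 < Real.sin (π * (v / F)) := by have := aq_sin_lb _ hy0 hy; linarith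
  have pz : 0 < Real.sin (π * z) := by have := aq_sin_lb _ hz hz2; linarith
  rw [mul_div_assoc π w F, mul_div_assoc π v F]
  have hP : 0 < (w * v / F) ^ σ := by positivity
  rw [le_div_iff₀ hP]
  refine le_trans (le_of_eq ?_) hh
  rw [← abs_of_pos hP, ← abs_mul]
  congr 1
  rw [Real.div_rpow hx0.le px.le, Real.div_rpow hy0.le py.le, Real.div_rpow hy0.le pz.le,
    Real.div_rpow (by positivity : 0 ≤ w * v) hF.le, Real.mul_rpow hw.le hv.le,
    Real.div_rpow hw.le hF.le, Real.div_rpow hv.le hF.le, Real.div_rpow zero_le_one hpi.le,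
    Real.one_rpow]
  have n1 : F ^ σ ≠ 0 := by positivity
  have n2 : w ^ σ ≠ 0 := by positivity
  have n3 : v ^ σ ≠ 0 := by positivity
  have n4 : π ^ σ ≠ 0 := by positivity
  have n5 := (Real.rpow_pos_of_pos px σ).ne'
  have n6 := (Real.rpow_pos_of_pos py σ).ne'
  have n7 := (Real.rpow_pos_of_pos pz σ).ne'
  generalize F ^ σ = a1 at *
  generalize w ^ σ = a2 at *
  generalize v ^ σ = a3 at *
  generalize π ^ σ = a4 at *
  generalize Real.sin (π * (w / F)) ^ σ = a5 at *
  generalize Real.sin (π * (v / F)) ^ σ = a6 at *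
  generalize Real.sin (π * z) ^ σ = a7 at *
  generalize f (w / F) = a8
  generalize f (v / F) = a9
  field_simp

set_option maxHeartbeats 2000000 in
lemma aq_ineq (P Q p s e1 e2 w v F : ℝ) (hP : 1.618 ≤ P) (hQ : 4.2 ≤ Q) (hp : 1 ≤ p)
    (hpQ : p ≤ Q / 2) (hs : 0.38 ≤ s) (hs1 : s ≤ 1) (he1 : |e1| = 1) (he2 : |e2| = 1)
    (hw : w = p * P + s * (e1 * P⁻¹)) (hv : v = s * Q + p * (e2 * Q⁻¹))
    (hF : F = P * Q - e1 * e2 * (P * Q)⁻¹) :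
    0 < F ∧ 0 < w ∧ 0 < v ∧ w / F ≤ 3 / 4 ∧ v / F ≤ 3 / 4 ∧ s * P⁻¹ ≤ 3 / 4 ∧ p * Q⁻¹ ≤ 3 / 4 ∧
    v / F ≤ 4 * (s * P⁻¹) ∧ w / F ≤ 4 * (p * Q⁻¹) ∧ 0.13 * p ≤ w * v / F ∧
    |v / F - s * P⁻¹| ≤ 10 * (w / F * (v / F)) ∧ |w / F - p * Q⁻¹| ≤ 10 * (v / F * (w / F)) := by
  have hP0 : 0 < P := by linarith
  have hQ0 : 0 < Q := by linarith
  have hPi : P⁻¹ ≤ 0.62 := by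
    rw [inv_le_comm₀ hP0 (by norm_num)]; norm_num; linarith
  have hPi0 : 0 < P⁻¹ := inv_pos.2 hP0
  have hQi0 : 0 < Q⁻¹ := inv_pos.2 hQ0
  have hpq : p * Q⁻¹ ≤ 1 / 2 := by
    rw [← div_eq_mul_inv, div_le_iff₀ hQ0]; linarith
  have hPQ : 6.79 ≤ P * Q := by nlinarith
  have hPQ0 : 0 < P * Q := by positivity
  have hPQi : (P * Q)⁻¹ ≤ 0.15 := by
    rw [inv_le_comm₀ hPQ0 (by norm_num)]; norm_num; linarith
  have hPQi0 : 0 < (P * Q)⁻¹ := inv_pos.2 hPQ0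
  have b1 : |s * (e1 * P⁻¹)| ≤ 0.62 := by
    rw [abs_mul, abs_mul, he1, abs_of_pos hPi0, abs_of_pos (by linarith : 0 < s)]; nlinarith
  have b2 : |p * (e2 * Q⁻¹)| ≤ 1 / 2 := by
    rw [abs_mul, abs_mul, he2, abs_of_pos hQi0, abs_of_pos (by linarith : 0 < p)]; linarith
  have he12 : |e1 * e2| = 1 := by rw [abs_mul, he1, he2]; norm_num
  have b3 : |e1 * e2 * (P * Q)⁻¹| ≤ 0.15 := by
    rw [abs_mul, he12, abs_of_pos hPQi0]; linarith
  rw [abs_le] at b1 b2 b3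
  have hpP : 1.618 ≤ p * P := by nlinarith
  have hsQ : 1.596 ≤ s * Q := by nlinarith
  have F1 : 0.97 * (P * Q) ≤ F := by rw [hF]; linarith
  have F2 : F ≤ 1.03 * (P * Q) := by rw [hF]; linarith
  have w1 : 0.6 * (p * P) ≤ w := by rw [hw]; linarith
  have w2 : w ≤ 1.4 * (p * P) := by rw [hw]; linarith
  have v1 : 0.6 * (s * Q) ≤ v := by rw [hv]; linarith
  have v2 : v ≤ 1.4 * (s * Q) := by rw [hv]; linarith
  have F0 : 0 < F := by linarith
  have w0 : 0 < w := by linarith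
  have v0 : 0 < v := by linarith
  have T : 0.13 * p ≤ w * v / F := by
    rw [le_div_iff₀ F0]
    calc 0.13 * p * F ≤ 0.13 * p * (1.03 * (P * Q)) := by gcongr
      _ ≤ 0.36 * 0.38 * (p * P * Q) := by
          have : 0 < p * P * Q := by positivity
          linarith
      _ ≤ 0.36 * s * (p * P * Q) := by gcongr
      _ = (0.6 * (p * P)) * (0.6 * (s * Q)) := by ring
      _ ≤ w * v := by gcongr
  refine ⟨F0, w0, v0, ?_, ?_, ?_, by linarith, ?_, ?_, T, ?_, ?_⟩
  · rw [div_le_iff₀ F0]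
    have : p * P ≤ (Q / 2) * P := by gcongr
    have hw' : w ≤ p * P + 0.62 := by rw [hw]; linarith
    linarith
  · rw [div_le_iff₀ F0]
    have : s * Q ≤ 1 * Q := by gcongr
    have hv' : v ≤ s * Q + 1 / 2 := by rw [hv]; linarith
    have : 1.618 * Q ≤ P * Q := by gcongr
    linarith
  · nlinarith
  · rw [div_le_iff₀ F0]
    calc v ≤ 1.4 * (s * Q) := v2
      _ ≤ 4 * 0.97 * (s * Q) := by linarith
      _ = 4 * (s * P⁻¹) * (0.97 * (P * Q)) := by field_simp
      _ ≤ _ := by gcongr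
  · rw [div_le_iff₀ F0]
    calc w ≤ 1.4 * (p * P) := w2
      _ ≤ 4 * 0.97 * (p * P) := by linarith
      _ = 4 * (p * Q⁻¹) * (0.97 * (P * Q)) := by field_simp
      _ ≤ _ := by gcongr
  · have e : v / F - s * P⁻¹ = (p * (e2 * Q⁻¹) * P + s * (e1 * e2 * (P * Q)⁻¹)) / (F * P) := by
      rw [← div_eq_mul_inv, div_sub_div _ _ F0.ne' hP0.ne']
      congr 1
      rw [hv, hF]; ring
    have e' : 10 * (w / F * (v / F)) = (10 * (w * v / F) * P) / (F * P) := by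
      field_simp
    rw [e, e', abs_div, abs_of_pos (mul_pos F0 hP0)]
    apply div_le_div_of_nonneg_right _ (by positivity)
    have c1 : 0.13 * p * P ≤ w * v / F * P := by gcongr
    have c2 : |s * (e1 * e2 * (P * Q)⁻¹)| ≤ 0.15 := by
      rw [abs_mul, abs_of_pos (by linarith : 0 < s)]
      have := abs_le.2 b3
      have h0 := abs_nonneg (e1 * e2 * (P * Q)⁻¹)
      nlinarith
    have c3 : |p * (e2 * Q⁻¹) * P| ≤ 1 / 2 * P := by
      rw [abs_mul, abs_of_pos hP0]
      have := abs_le.2 b2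
      gcongr
    have c4 : 1 * P ≤ p * P := by gcongr
    refine (abs_add_le _ _).trans ?_
    linarith
  · have e : w / F - p * Q⁻¹ = (s * (e1 * P⁻¹) * Q + p * (e1 * e2 * (P * Q)⁻¹)) / (F * Q) := by
      rw [← div_eq_mul_inv, div_sub_div _ _ F0.ne' hQ0.ne']
      congr 1
      rw [hw, hF]; ring
    have e' : 10 * (v / F * (w / F)) = (10 * (w * v / F) * Q) / (F * Q) := by
      field_simp
    rw [e, e', abs_div, abs_of_pos (mul_pos F0 hQ0)]
    apply div_le_div_of_nonneg_right _ (by positivity)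
    have c1 : 0.13 * p * Q ≤ w * v / F * Q := by gcongr
    have c2 : |p * (e1 * e2 * (P * Q)⁻¹)| ≤ 0.15 * (Q / 2) := by
      rw [abs_mul, abs_of_pos (by linarith : 0 < p), mul_comm]
      have := abs_le.2 b3
      gcongr
    have c3 : |s * (e1 * P⁻¹) * Q| ≤ 0.62 * Q := by
      rw [abs_mul, abs_of_pos hQ0]
      have := abs_le.2 b1
      gcongr
    have c4 : 1 * Q ≤ p * Q := by gcongr
    refine (abs_add_le _ _).trans ?_
    linarith

lemma aq_final (σ α C X T Q i : ℝ) (hσ : 1 < σ) (hα : 0 < α) (hC : 0 < C) (hX : 0 < X)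
    (hQ : 0 < Q) (hi : 0 < i) (h1 : X ≤ 20 * i / Q) (h2 : i / 20 ≤ T) :
    C * X ^ α / T ^ σ ≤ C * 20 ^ α * 20 ^ σ / (Q ^ α * i ^ (σ - α)) := by
  have a1 : X ^ α ≤ (20 * i / Q) ^ α := Real.rpow_le_rpow hX.le h1 hα.le
  have a2 : (i / 20) ^ σ ≤ T ^ σ := Real.rpow_le_rpow (by positivity) h2 (by linarith)
  calc C * X ^ α / T ^ σ ≤ C * (20 * i / Q) ^ α / (i / 20) ^ σ := by gcongr
    _ = _ := by
      rw [Real.div_rpow (by positivity) hQ.le, Real.mul_rpow (by norm_num) hi.le,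
        Real.div_rpow hi.le (by norm_num), Real.rpow_sub hi]
      have : i ^ α ≠ 0 := by positivity
      have : i ^ σ ≠ 0 := by positivity
      have : Q ^ α ≠ 0 := by positivity
      have : (20:ℝ) ^ σ ≠ 0 := by positivity
      field_simp

/-- Quality of the approximation of the terms of the tensor product sum by the
corresponding limit expressions along the rows of the Wythoff array. -/
theorem approximation_quality
    (σ : ℝ) (hσ : 1 < σ) (f : ℝ → ℝ)
    (hper : ∀ t : ℝ, f (t + 1) = f t)
    (α : ℝ) (hα0 : 0 < α) (hα1 : α ≤ 1)
    (hHolder : ∃ L : ℝ, 0 ≤ L ∧ ∀ x ∈ Set.Ico (0 : ℝ) 1, ∀ y ∈ Set.Ico (0 : ℝ) 1,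
      |f x - f y| ≤ L * |x - y| ^ α) :
    ∃ A Astar : ℝ, 0 < A ∧ 0 < Astar ∧
      ∀ i n k : ℕ, 0 < i → 0 < n → 0 < k → (k : ℤ) < (n : ℤ) - (mu i : ℤ) →
        |1 / (Nat.fib n : ℝ) ^ σ *
            (f ((W i k : ℝ) / Nat.fib n) / Real.sin (π * (W i k : ℝ) / Nat.fib n) ^ σ) *
            (f ((Wstar i n k : ℝ) / Nat.fib n) /
              Real.sin (π * (Wstar i n k : ℝ) / Nat.fib n) ^ σ)
          - f 0 / (π ^ σ * (W i k : ℝ) ^ σ) *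
            (f (-wminus i * phi ^ (-(k : ℝ))) /
              Real.sin (π * -wminus i * phi ^ (-(k : ℝ))) ^ σ)|
          ≤ A / (phi ^ (α * ((n : ℝ) - (k : ℝ))) * (i : ℝ) ^ (σ - α)) ∧
        |1 / (Nat.fib n : ℝ) ^ σ *
            (f ((W i k : ℝ) / Nat.fib n) / Real.sin (π * (W i k : ℝ) / Nat.fib n) ^ σ) *
            (f ((Wstar i n k : ℝ) / Nat.fib n) /
              Real.sin (π * (Wstar i n k : ℝ) / Nat.fib n) ^ σ)
          - f (wplus i * phi ^ (-((n : ℝ) - (k : ℝ)))) /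
              Real.sin (π * wplus i * phi ^ (-((n : ℝ) - (k : ℝ)))) ^ σ *
            (f 0 / (π ^ σ * (Wstar i n k : ℝ) ^ σ))|
          ≤ Astar / (phi ^ (α * (k : ℝ)) * (i : ℝ) ^ (σ - α)) := by
  obtain ⟨C, hC, hterm⟩ := aq_term σ hσ f α hα0 hα1 hHolder 10 (by norm_num)
  refine ⟨C * 20 ^ α * 20 ^ σ, C * 20 ^ α * 20 ^ σ, by positivity, by positivity, ?_⟩
  intro i n k hi hn hk hkn
  have h1 := aq_phi_lb
  have h2 := aq_phi_ub
  have hphi0 : 0 < phi := by linarith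
  obtain ⟨N, rfl⟩ : ∃ N, n = k + N := ⟨n - k, by omega⟩
  have hN : mu i < N := by push_cast at hkn; omega
  obtain ⟨hN3, hpN⟩ := aq_mu i hi N hN
  obtain ⟨hs0, hs1, hip, hpi5, -, -, -, -⟩ := aq_row i hi
  have hi' : (1 : ℝ) ≤ i := by exact_mod_cast hi
  have hw := aq_W_closed i hi k
  have hv := aq_Wstar_closed i hi k N hk
  have hF := aq_fib_closed (k + N)
  rw [aq_psi] at hw hv hF
  have eF : phi ^ (k + N) - (-1) ^ (k + N) * (phi ^ (k + N))⁻¹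
      = phi ^ k * phi ^ N - (-1) ^ k * (-1) ^ N * (phi ^ k * phi ^ N)⁻¹ := by
    rw [pow_add, pow_add]
  rw [eF] at hF
  have hPk : 1.618 ≤ phi ^ k := by
    calc (1.618 : ℝ) ≤ phi ^ 1 := by rw [pow_one]; exact h1.le
      _ ≤ phi ^ k := pow_le_pow_right₀ (by linarith) hk
  have hQN : 4.2 ≤ phi ^ N := by
    calc (4.2 : ℝ) ≤ 1.618 ^ 3 := by norm_num
      _ ≤ phi ^ 3 := by gcongr
      _ ≤ phi ^ N := pow_le_pow_right₀ (by linarith) hN3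
  have hP0 : 0 < phi ^ k := by linarith
  have hQ0 : 0 < phi ^ N := by linarith
  obtain ⟨F0, w0, v0, i1, i2, i3, i4, i5, i6, i7, i8, i9⟩ :=
    aq_ineq (phi ^ k) (phi ^ N) (wplus i) (-wminus i) ((-1) ^ k) ((-1) ^ N) _ _ _
      hPk hQN (by linarith) hpN (by linarith) hs1 (by simp) (by simp) hw hv hF
  have hr : 0 < 2 * phi - 1 := by linarith
  rw [mul_div_mul_left _ _ hr.ne'] at i1 i2 i5 i6 i8 i9
  rw [mul_div_mul_left _ _ hr.ne'] at i8 i9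
  have F0' := pos_of_mul_pos_right F0 hr.le
  have w0' := pos_of_mul_pos_right w0 hr.le
  have v0' := pos_of_mul_pos_right v0 hr.le
  have e1 : phi ^ (-(k : ℝ)) = (phi ^ k)⁻¹ := by
    rw [Real.rpow_neg hphi0.le, Real.rpow_natCast]
  have e0 : ((k + N : ℕ) : ℝ) - k = N := by push_cast; ring
  have e2 : phi ^ (-(N : ℝ)) = (phi ^ N)⁻¹ := by
    rw [Real.rpow_neg hphi0.le, Real.rpow_natCast]
  have e3 : phi ^ (α * (N : ℝ)) = (phi ^ N) ^ α := by
    rw [mul_comm, Real.rpow_mul hphi0.le, Real.rpow_natCast]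
  have e4 : phi ^ (α * (k : ℝ)) = (phi ^ k) ^ α := by
    rw [mul_comm, Real.rpow_mul hphi0.le, Real.rpow_natCast]
  rw [e0, e1, e2, e3, e4]
  have hT : (i : ℝ) / 20 ≤ (W i k : ℝ) * (Wstar i (k + N) k : ℝ) / (Nat.fib (k + N) : ℝ) := by
    have e : (2 * phi - 1) * (W i k : ℝ) * ((2 * phi - 1) * (Wstar i (k + N) k : ℝ))
        / ((2 * phi - 1) * (Nat.fib (k + N) : ℝ))
        = (2 * phi - 1) * ((W i k : ℝ) * (Wstar i (k + N) k : ℝ) / (Nat.fib (k + N) : ℝ)) := by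
      field_simp
    rw [e] at i7
    have hpos : 0 < (W i k : ℝ) * (Wstar i (k + N) k : ℝ) / (Nat.fib (k + N) : ℝ) := by
      positivity
    nlinarith
  have hz1 : 0 < -wminus i * (phi ^ k)⁻¹ := by
    apply mul_pos _ (inv_pos.2 hP0); linarith
  have hz2 : 0 < wplus i * (phi ^ N)⁻¹ := by
    apply mul_pos _ (inv_pos.2 hQ0); linarith
  constructor
  · have q := hterm (Nat.fib (k + N)) (W i k) (Wstar i (k + N) k) _ F0' w0' v0' hz1 i1 i2 i3 i5 i8
    rw [mul_assoc π]
    refine q.trans ?_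
    apply aq_final σ α C _ _ _ _ hσ hα0 hC (by positivity) hQ0 (by linarith) _ hT
    refine i6.trans ?_
    rw [div_eq_mul_inv, ← mul_assoc]
    apply mul_le_mul_of_nonneg_right _ (inv_pos.2 hQ0).le
    linarith
  · have q := hterm (Nat.fib (k + N)) (Wstar i (k + N) k) (W i k) _ F0' v0' w0' hz2 i2 i1 i4 i6 i9
    rw [mul_assoc π (wplus i)]
    rw [mul_right_comm (1 / (Nat.fib (k + N) : ℝ) ^ σ), mul_comm (f (wplus i * _) / _)]
    refine q.trans ?_
    rw [mul_comm (Wstar i (k + N) k : ℝ)]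
    apply aq_final σ α C _ _ _ _ hσ hα0 hC (by positivity) hP0 (by linarith) _ hT
    refine i5.trans ?_
    rw [div_eq_mul_inv, ← mul_assoc]
    apply mul_le_mul_of_nonneg_right _ (inv_pos.2 hP0).le
    linarith
end

section
/- For all integers n ≥ 2 it holds that Σ_{m=1}^{F_n−1} 1/( sin(πm/F_n)² · sin(πF_{n−1}m/F_n)² ) = (4n/75) F_{2n} − (17/1125) L_{2n} − (−1)^n · 116/1125 − 1/9. -/
open Real
def lucas : ℕ → ℕ
  | 0 => 2
  | 1 => 1
  | (n + 2) => lucas (n + 1) + lucas n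

open Polynomial in
lemma key (s : Finset ℂ) (h1 : (1:ℂ) ∉ s) (P T : ℂ[X]) (d : ℕ) (hT : T.natDegree ≤ d)
    (hP : P.natDegree < s.card + d)
    (hdvd : (X - C 1) ^ (d+1) ∣ P - T * Lagrange.nodal s id) :
    ∑ ζ ∈ s, P.eval ζ / ((ζ - 1) ^ (d+1) * (derivative (Lagrange.nodal s id)).eval ζ)
      = - T.coeff d := by
  classical
  obtain ⟨Q, hQ⟩ := hdvd
  have hm : ((X - C (1:ℂ)) ^ (d+1)).Monic := (monic_X_sub_C 1).pow _
  have hmd : ((X - C (1:ℂ)) ^ (d+1)).natDegree = d + 1 := by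
    rw [natDegree_pow, natDegree_X_sub_C, mul_one]
  have hN : (Lagrange.nodal s (id : ℂ → ℂ)).natDegree = s.card := Lagrange.natDegree_nodal
  have hdeg : (P - T * Lagrange.nodal s id).natDegree ≤ s.card + d := by
    refine (natDegree_sub_le _ _).trans (max_le hP.le ?_)
    refine natDegree_mul_le.trans ?_
    omega
  have hc : (P - T * Lagrange.nodal s id).coeff (d + s.card) = - T.coeff d := by
    rw [coeff_sub, coeff_eq_zero_of_natDegree_lt (by omega),
      coeff_mul_add_eq_of_natDegree_le hT hN.le]
    have : (Lagrange.nodal s (id : ℂ → ℂ)).coeff s.card = 1 := by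
      have := (Lagrange.nodal_monic (s := s) (v := (id : ℂ → ℂ)))
      rw [Monic, leadingCoeff, hN] at this
      exact this
    rw [this]; ring
  have hQd : Q.degree < s.card := by
    by_cases hQ0 : Q = 0
    · rw [hQ0, degree_zero]; exact WithBot.bot_lt_coe _
    · rw [hQ, hm.natDegree_mul' hQ0, hmd] at hdeg
      rw [degree_eq_natDegree hQ0]
      exact_mod_cast (by omega : Q.natDegree < s.card)
  rcases s.eq_empty_or_nonempty with rfl | hs
  · have : Q = 0 := by
      rw [← degree_eq_bot]
      simpa using hQd
    rw [← hc, hQ, this]; simp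
  · have hpos := hs.card_pos
    have hQn : Q.natDegree ≤ s.card - 1 := by
      by_cases hQ0 : Q = 0
      · simp [hQ0]
      · have := (natDegree_lt_iff_degree_lt hQ0).2 hQd
        omega
    have h2 : (P - T * Lagrange.nodal s id).coeff (d + s.card) = Q.coeff (s.card - 1) := by
      rw [hQ, (by omega : d + s.card = (d+1) + (s.card - 1)),
        coeff_mul_add_eq_of_natDegree_le hmd.le hQn]
      have : ((X - C (1:ℂ)) ^ (d+1)).coeff (d+1) = 1 := by
        have := hm
        rw [Monic, leadingCoeff, hmd] at this
        exact this
      rw [this, one_mul]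
    rw [← hc, h2, Lagrange.coeff_eq_sum (v := id) (Set.injOn_id _) hQd]
    refine Finset.sum_congr rfl fun ζ hζ => ?_
    have e1 := Lagrange.eval_nodal_derivative_eval_node_eq (v := (id : ℂ → ℂ)) hζ
    rw [Lagrange.eval_nodal] at e1
    simp only [id] at e1 ⊢
    rw [← e1]
    have e2 := congrArg (eval ζ) hQ
    have e3 := Lagrange.eval_nodal_at_node (v := (id : ℂ → ℂ)) hζ
    simp only [id] at e3
    simp only [eval_sub, eval_mul, eval_pow, eval_X, eval_C] at e2
    have e3' : eval ζ (Lagrange.nodal s (id : ℂ → ℂ)) = 0 := e3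
    rw [e3', mul_zero, sub_zero] at e2
    have : ζ - 1 ≠ 0 := sub_ne_zero.2 (fun h => h1 (h ▸ hζ))
    rw [e2, mul_div_mul_left _ _ (pow_ne_zero _ this)]

/-- nontrivial roots of unity -/
noncomputable def sr (a : ℕ) : Finset ℂ := (Polynomial.nthRootsFinset a (1:ℂ)).erase 1

lemma mem_sr {a : ℕ} (ha : 0 < a) {z : ℂ} : z ∈ sr a ↔ z ≠ 1 ∧ z ^ a = 1 := by
  rw [sr, Finset.mem_erase, Polynomial.mem_nthRootsFinset ha]

lemma card_sr {a : ℕ} (ha : 0 < a) : (sr a).card = a - 1 := by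
  rw [sr, Finset.card_erase_of_mem (Polynomial.one_mem_nthRootsFinset ha),
    (Complex.isPrimitiveRoot_exp a ha.ne').card_nthRootsFinset]

open Polynomial in
noncomputable def nd (a : ℕ) : ℂ[X] := Lagrange.nodal (sr a) id

open Polynomial in
lemma nd_mul {a : ℕ} (ha : 0 < a) : (X - C 1) * nd a = X ^ a - 1 := by
  rw [X_pow_sub_one_eq_prod ha (Complex.isPrimitiveRoot_exp a ha.ne'), nd, Lagrange.nodal_eq, sr]
  exact Finset.mul_prod_erase _ (fun z => X - C z) (one_mem_nthRootsFinset ha)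

open Polynomial in
lemma nd_eval {a : ℕ} (ha : 0 < a) (z : ℂ) : (z - 1) * (nd a).eval z = z ^ a - 1 := by
  have := congrArg (eval z) (nd_mul ha)
  simpa using this

open Polynomial in
lemma nd_deriv {a : ℕ} (ha : 0 < a) (z : ℂ) :
    (nd a).eval z + (z - 1) * (derivative (nd a)).eval z = a * z ^ (a-1) := by
  have := congrArg (fun p => eval z (derivative p)) (nd_mul ha)
  simpa [derivative_X_pow] using this

open Polynomial in
noncomputable def ps (e : ℕ → ℂ) : ℂ[X] :=
  C (e 0) + C (e 1) * (X - C 1) + C (e 2) * (X - C 1)^2 + C (e 3) * (X - C 1)^3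
    + C (e 4) * (X - C 1)^4

noncomputable def cv (e f : ℕ → ℂ) : ℕ → ℂ
  | 0 => e 0 * f 0
  | 1 => e 0 * f 1 + e 1 * f 0
  | 2 => e 0 * f 2 + e 1 * f 1 + e 2 * f 0
  | 3 => e 0 * f 3 + e 1 * f 2 + e 2 * f 1 + e 3 * f 0
  | 4 => e 0 * f 4 + e 1 * f 3 + e 2 * f 2 + e 3 * f 1 + e 4 * f 0
  | _ => 0

open Polynomial in
lemma ps_mul (e f : ℕ → ℂ) : (X - C 1)^5 ∣ ps e * ps f - ps (cv e f) := by
  refine ⟨C (e 1 * f 4 + e 2 * f 3 + e 3 * f 2 + e 4 * f 1)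
    + C (e 2 * f 4 + e 3 * f 3 + e 4 * f 2) * (X - C 1)
    + C (e 3 * f 4 + e 4 * f 3) * (X - C 1)^2 + C (e 4 * f 4) * (X - C 1)^3, ?_⟩
  simp only [ps, cv, C_add, C_mul]
  ring

open Polynomial in
lemma ps_coeff (e : ℕ → ℂ) : (ps e).coeff 4 = e 4 := by
  have h2 : ((X - C (1:ℂ)) ^ 2).coeff 4 = 0 := coeff_eq_zero_of_natDegree_lt (by simp [-map_one])
  have h3 : ((X - C (1:ℂ)) ^ 3).coeff 4 = 0 := coeff_eq_zero_of_natDegree_lt (by simp [-map_one])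
  have h4 : ((X - C (1:ℂ)) ^ 4).coeff 4 = 1 := by
    have h : ((X - C (1:ℂ)) ^ 4).Monic := (monic_X_sub_C 1).pow _
    have hd : ((X - C (1:ℂ)) ^ 4).natDegree = 4 := by simp [-map_one]
    rw [Monic, leadingCoeff, hd] at h
    exact h
  simp [ps, coeff_X, h2, h3, h4, -map_one]

open Polynomial in
lemma ps_natDegree (e : ℕ → ℂ) : (ps e).natDegree ≤ 4 := by
  unfold ps
  compute_degree

noncomputable def ec (a : ℂ) : ℕ → ℂ
  | 0 => 1440
  | 1 => 720
  | 2 => -120 + 120 * a^2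
  | 3 => 60 - 60 * a^2
  | 4 => -38 + 40 * a^2 - 2 * a^4
  | _ => 0

noncomputable def bc (a : ℂ) : ℕ → ℂ
  | 0 => 1
  | 1 => a
  | 2 => a * (a-1)/2
  | 3 => a * (a-1) * (a-2)/6
  | 4 => a * (a-1) * (a-2) * (a-3)/24
  | 5 => a * (a-1) * (a-2) * (a-3) * (a-4)/120
  | _ => 0

open Polynomial in
lemma bin_trunc (a : ℕ) : (X - C 1)^6 ∣ X ^ a - (ps (bc a) + C (bc a 5) * (X - C 1)^5) := by
  induction a with
  | zero => simp [ps, bc]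
  | succ a ih =>
    have h : (X:ℂ[X])^(a+1) - (ps (bc (a+1 : ℕ)) + C (bc (a+1 : ℕ) 5) * (X - C 1)^5)
      = X * (X ^ a - (ps (bc a) + C (bc a 5) * (X - C 1)^5)) + (X - C 1)^6 * C (bc a 5) := by
      have g1 : bc (a+1:ℕ) 1 = bc a 1 + bc a 0 := by simp only [bc]; push_cast; ring
      have g2 : bc (a+1:ℕ) 2 = bc a 2 + bc a 1 := by simp only [bc]; push_cast; ring
      have g3 : bc (a+1:ℕ) 3 = bc a 3 + bc a 2 := by simp only [bc]; push_cast; ring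
      have g4 : bc (a+1:ℕ) 4 = bc a 4 + bc a 3 := by simp only [bc]; push_cast; ring
      have g5 : bc (a+1:ℕ) 5 = bc a 5 + bc a 4 := by simp only [bc]; push_cast; ring
      have g0 : bc (a+1:ℕ) 0 = bc a 0 := rfl
      simp only [ps, g0, g1, g2, g3, g4, g5, C_add, C_1]
      ring
    rw [h]
    exact dvd_add (dvd_mul_of_dvd_right ih _) (dvd_mul_right _ _)

open Polynomial in
lemma e_trunc {a : ℕ} (ha : 0 < a) :
    (X - C 1)^5 ∣ C (720 * (a:ℂ)) * (X ^ a + 1) - ps (ec a) * nd a := by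
  have hu : (X - C (1:ℂ)) ≠ 0 := X_sub_C_ne_zero 1
  rw [← mul_dvd_mul_iff_left hu]
  have h : (X - C 1) * (C (720 * (a:ℂ)) * (X ^ a + 1) - ps (ec a) * nd a)
    = C (720 * (a:ℂ)) * (X - C 1) * (X ^ a + 1) - ps (ec a) * (X ^ a - 1) := by
    rw [← nd_mul ha]; ring
  rw [h]
  obtain ⟨R, hR⟩ := bin_trunc a
  rw [sub_eq_iff_eq_add] at hR
  rw [hR]
  set e := ec a with he
  set b := bc a with hb
  have c1 : e 0 * b 1 = 720 * a * 2 := by simp only [he, hb, ec, bc]; ring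
  have c2 : e 0 * b 2 + e 1 * b 1 = 720 * a * b 1 := by simp only [he, hb, ec, bc]; ring
  have c3 : e 0 * b 3 + e 1 * b 2 + e 2 * b 1 = 720 * a * b 2 := by
    simp only [he, hb, ec, bc]; ring
  have c4 : e 0 * b 4 + e 1 * b 3 + e 2 * b 2 + e 3 * b 1 = 720 * a * b 3 := by
    simp only [he, hb, ec, bc]; ring
  have c5 : e 0 * b 5 + e 1 * b 4 + e 2 * b 3 + e 3 * b 2 + e 4 * b 1 = 720 * a * b 4 := by
    simp only [he, hb, ec, bc]; ring
  have c0 : b 0 = 1 := rfl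
  refine ⟨C (720 * (a:ℂ)) * (X - C 1) * R - ps e * R + C (720 * (a:ℂ)) * C (b 5)
    - (C (e 1 * b 5 + e 2 * b 4 + e 3 * b 3 + e 4 * b 2)
    + C (e 2 * b 5 + e 3 * b 4 + e 4 * b 3) * (X - C 1)
    + C (e 3 * b 5 + e 4 * b 4) * (X - C 1)^2 + C (e 4 * b 5) * (X - C 1)^3), ?_⟩
  have d1 := congrArg (C : ℂ → ℂ[X]) c1
  have d2 := congrArg (C : ℂ → ℂ[X]) c2
  have d3 := congrArg (C : ℂ → ℂ[X]) c3
  have d4 := congrArg (C : ℂ → ℂ[X]) c4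
  have d5 := congrArg (C : ℂ → ℂ[X]) c5
  have hC2 : (C (2:ℂ) : ℂ[X]) = 2 := rfl
  generalize hK : 720 * (a:ℂ) = K at *
  clear_value e b
  simp only [ps, c0, C_add, C_mul, C_1, hC2] at *
  generalize (X - 1 : ℂ[X]) = u at *
  linear_combination (-u) * d1 - u^2 * d2 - u^3 * d3 - u^4 * d4 - u^5 * d5

noncomputable def cc (z : ℂ) : ℂ := -4 * z / (z - 1)^2

noncomputable def DD (a b : ℕ) : ℂ := ∑ z ∈ sr a, cc z * (cc (z ^ b) - 1)

open Polynomial in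
lemma sum_cc {a : ℕ} (ha : 0 < a) : ∑ z ∈ sr a, cc z = ((a:ℂ)^2 - 1) / 3 := by
  set T : ℂ[X] := C (ec a 0) + C (ec a 1) * (X - C 1) + C (ec a 2) * (X - C 1)^2 with hT
  have hd : (X - C 1)^(2+1) ∣ C (720 * (a:ℂ)) * (X ^ a + 1) - T * Lagrange.nodal (sr a) id := by
    have h1 : (X - C (1:ℂ))^(2+1) ∣ C (720 * (a:ℂ)) * (X ^ a + 1) - ps (ec a) * nd a :=
      (pow_dvd_pow _ (by norm_num)).trans (e_trunc ha)
    have h2 : C (720 * (a:ℂ)) * (X ^ a + 1) - T * Lagrange.nodal (sr a) id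
      = (C (720 * (a:ℂ)) * (X ^ a + 1) - ps (ec a) * nd a)
        + (X - C 1)^(2+1) * ((C (ec a 3) + C (ec a 4) * (X - C 1)) * nd a) := by
      rw [hT, ps, nd]; ring
    rw [h2]
    exact dvd_add h1 (dvd_mul_right _ _)
  have hTd : T.natDegree ≤ 2 := by
    rw [hT]; compute_degree
  have hTc : T.coeff 2 = ec a 2 := by
    have h4 : ((X - C (1:ℂ)) ^ 2).coeff 2 = 1 := by
      have h : ((X - C (1:ℂ)) ^ 2).Monic := (monic_X_sub_C 1).pow _
      have hd : ((X - C (1:ℂ)) ^ 2).natDegree = 2 := by simp [-map_one]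
      rw [Monic, leadingCoeff, hd] at h
      exact h
    rw [hT]
    simp [coeff_X, h4, -map_one]
  have hPd : (C (720 * (a:ℂ)) * (X ^ a + 1)).natDegree < (sr a).card + 2 := by
    rw [card_sr ha]
    have : (C (720 * (a:ℂ)) * (X ^ a + 1)).natDegree ≤ a := by compute_degree
    omega
  have hk := key (sr a) (by simp [sr]) _ T 2 hTd hPd hd
  rw [hTc] at hk
  have ha' : (a:ℂ) ≠ 0 := by exact_mod_cast ha.ne'
  have hs : ∀ z ∈ sr a, eval z (C (720 * (a:ℂ)) * (X ^ a + 1)) /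
      ((z - 1) ^ (2+1) * (derivative (Lagrange.nodal (sr a) id)).eval z) = -360 * cc z := by
    intro z hz
    obtain ⟨hz1, hza⟩ := (mem_sr ha).1 hz
    have hz1' : z - 1 ≠ 0 := sub_ne_zero.2 hz1
    have hz0 : z ≠ 0 := by rintro rfl; simp [ha.ne'] at hza
    have n0 := nd_eval ha z
    rw [hza, sub_self] at n0
    have n0 := (mul_eq_zero.1 n0).resolve_left hz1'
    have n1 := nd_deriv ha z
    rw [n0, zero_add] at n1
    have n2 : z ^ (a-1) = z⁻¹ := by
      apply eq_inv_of_mul_eq_one_left; rw [← pow_succ, Nat.sub_add_cancel ha, hza]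
    rw [n2] at n1
    have n3 : (derivative (nd a)).eval z = a * z⁻¹ / (z - 1) := by
      rw [eq_div_iff hz1', mul_comm]; exact n1
    rw [nd] at n3
    rw [n3, cc]
    simp only [eval_mul, eval_C, eval_add, eval_pow, eval_X, eval_one, hza]
    field_simp
    ring
  rw [Finset.sum_congr rfl hs, ← Finset.mul_sum] at hk
  simp only [ec] at hk
  linear_combination (-1/360) * hk

lemma pow_ne_one_sr {a b : ℕ} (ha : 0 < a) (hab : a.Coprime b) {z : ℂ} (hz : z ∈ sr a) :
    z ^ b ≠ 1 := by
  obtain ⟨hz1, hza⟩ := (mem_sr ha).1 hz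
  intro h
  apply hz1
  have := pow_gcd_eq_one.2 ⟨hza, h⟩
  rwa [hab, pow_one] at this

open Polynomial in
lemma term_eq {a b c : ℕ} (ha : 0 < a) (hb : 0 < b) (hc : 0 < c) (hab : a.Coprime b)
    (hac : a.Coprime c) {z : ℂ} (hz : z ∈ sr a) :
    eval z ((C (720 * (a:ℂ)) * (X ^ a + 1)) * (C (720 * (b:ℂ)) * (X ^ b + 1)) *
      (C (720 * (c:ℂ)) * (X ^ c + 1))) /
      ((z - 1) ^ (4+1) * (derivative (nd a * nd b * nd c)).eval z)
     = 720^3 * (a * b * c) * (-1/2) * (cc z / a *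
        (((z^b+1)*(z^c+1))/((z^b-1)*(z^c-1)))) := by
  have ha' : (a:ℂ) ≠ 0 := by exact_mod_cast ha.ne'
  obtain ⟨hz1, hza⟩ := (mem_sr ha).1 hz
  have hz1' : z - 1 ≠ 0 := sub_ne_zero.2 hz1
  have hz0 : z ≠ 0 := by rintro rfl; simp [ha.ne'] at hza
  have hb1 : z ^ b - 1 ≠ 0 := sub_ne_zero.2 (pow_ne_one_sr ha hab hz)
  have hc1 : z ^ c - 1 ≠ 0 := sub_ne_zero.2 (pow_ne_one_sr ha hac hz)
  have n0 := nd_eval ha z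
  rw [hza, sub_self] at n0
  have n0 := (mul_eq_zero.1 n0).resolve_left hz1'
  have n1 := nd_deriv ha z
  rw [n0, zero_add] at n1
  have n2 : z ^ (a-1) = z⁻¹ := by
    apply eq_inv_of_mul_eq_one_left; rw [← pow_succ, Nat.sub_add_cancel ha, hza]
  rw [n2] at n1
  have n3 : (derivative (nd a)).eval z = a * z⁻¹ / (z - 1) := by
    rw [eq_div_iff hz1', mul_comm]; exact n1
  have nb : (nd b).eval z = (z ^ b - 1) / (z - 1) := by
    rw [eq_div_iff hz1', mul_comm]; exact nd_eval hb z
  have nc : (nd c).eval z = (z ^ c - 1) / (z - 1) := by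
    rw [eq_div_iff hz1', mul_comm]; exact nd_eval hc z
  have nt : (derivative (nd a * nd b * nd c)).eval z
      = (a * z⁻¹ / (z - 1)) * ((z ^ b - 1) / (z - 1)) * ((z ^ c - 1) / (z - 1)) := by
    simp only [derivative_mul, eval_add, eval_mul, n0, n3, nb, nc]; ring
  rw [nt, cc]
  simp only [eval_mul, eval_C, eval_add, eval_pow, eval_X, eval_one, hza]
  generalize z ^ b = x at *
  generalize z ^ c = y at *
  field_simp
  ring

lemma cot_sq {x : ℂ} (hx : x ≠ 1) : ((x+1)*(x+1))/((x-1)*(x-1)) = -(cc x - 1) := by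
  have : x - 1 ≠ 0 := sub_ne_zero.2 hx
  rw [cc]; field_simp; ring

lemma disj_sr {a b : ℕ} (ha : 0 < a) (hb : 0 < b) (hab : a.Coprime b) :
    Disjoint (sr a) (sr b) := by
  rw [Finset.disjoint_left]
  intro z hz hz'
  exact pow_ne_one_sr ha hab hz ((mem_sr hb).1 hz').2

open Polynomial in
lemma three_term {g h k : ℕ} (hg : 0 < g) (hh : 0 < h) (hk : k = g + h) (hgh : g.Coprime h) :
    DD g h / g + DD h k / h - DD k h / k
      = -2 * (cv (cv (ec g) (ec h)) (ec k) 4) / (720^3 * (g * h * k)) := by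
  have hk0 : 0 < k := by omega
  have hgk : g.Coprime k := by rw [hk]; simpa using hgh
  have hhk : h.Coprime k := by rw [hk]; simpa using hgh.symm
  have d1 := disj_sr hg hh hgh
  have d2 := disj_sr hg hk0 hgk
  have d3 := disj_sr hh hk0 hhk
  have d4 : Disjoint (sr g ∪ sr h) (sr k) := Finset.disjoint_union_left.2 ⟨d2, d3⟩
  have hnod : Lagrange.nodal (sr g ∪ sr h ∪ sr k) id = nd g * nd h * nd k := by
    simp only [nd, Lagrange.nodal_eq]
    rw [Finset.prod_union d4, Finset.prod_union d1]
  have hcard : (sr g ∪ sr h ∪ sr k).card = (g - 1) + (h - 1) + (k - 1) := by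
    rw [Finset.card_union_of_disjoint d4, Finset.card_union_of_disjoint d1, card_sr hg,
      card_sr hh, card_sr hk0]
  set P : ℂ[X] := (C (720 * (g:ℂ)) * (X ^ g + 1)) * (C (720 * (h:ℂ)) * (X ^ h + 1)) *
      (C (720 * (k:ℂ)) * (X ^ k + 1)) with hP
  have hPd : P.natDegree < (sr g ∪ sr h ∪ sr k).card + 4 := by
    have : P.natDegree ≤ g + h + k := by rw [hP]; compute_degree
    rw [hcard]; omega
  have hdvd : (X - C 1)^(4+1) ∣ P - ps (cv (cv (ec g) (ec h)) (ec k)) *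
      Lagrange.nodal (sr g ∪ sr h ∪ sr k) id := by
    rw [hnod, hP]
    obtain ⟨A, hA⟩ := e_trunc hg
    obtain ⟨B, hB⟩ := e_trunc hh
    obtain ⟨D, hD⟩ := e_trunc hk0
    obtain ⟨E, hE⟩ := ps_mul (ec g) (ec h)
    obtain ⟨F, hF⟩ := ps_mul (cv (ec g) (ec h)) (ec k)
    rw [sub_eq_iff_eq_add] at hA hB hD
    rw [hA, hB, hD]
    generalize (X - C (1:ℂ)) = u at *
    generalize ps (ec g) = p1 at *
    generalize ps (ec h) = p2 at *
    generalize ps (ec k) = p3 at *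
    generalize ps (cv (ec g) (ec h)) = p4 at *
    generalize nd g = n1 at *
    generalize nd h = n2 at *
    generalize nd k = n3 at *
    refine ⟨A * (u^5*B + p2*n2) * (u^5*D + p3*n3) + p1*n1*B*(u^5*D + p3*n3) + p1*n1*p2*n2*D
      + E * p3 * (n1 * n2 * n3) + F * (n1 * n2 * n3), ?_⟩
    linear_combination (p3 * (n1 * n2 * n3)) * hE + (n1 * n2 * n3) * hF
  have hkey := key (sr g ∪ sr h ∪ sr k) (by simp [sr]) P _ 4 (ps_natDegree _) hPd hdvd
  rw [ps_coeff, Finset.sum_union d4, Finset.sum_union d1, hnod] at hkey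
  have s1 : ∑ z ∈ sr g, eval z P / ((z - 1) ^ (4+1) * (derivative (nd g * nd h * nd k)).eval z)
      = 720^3 * (g * h * k) * (1/2) * (DD g h / g) := by
    rw [DD, Finset.sum_div, Finset.mul_sum]
    refine Finset.sum_congr rfl fun z hz => ?_
    rw [hP, term_eq hg hh hk0 hgh hgk hz]
    have e : z ^ k = z ^ h := by rw [hk, pow_add, ((mem_sr hg).1 hz).2, one_mul]
    rw [e, cot_sq (pow_ne_one_sr hg hgh hz)]
    ring
  have s2 : ∑ z ∈ sr h, eval z P / ((z - 1) ^ (4+1) * (derivative (nd g * nd h * nd k)).eval z)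
      = 720^3 * (g * h * k) * (1/2) * (DD h k / h) := by
    rw [DD, Finset.sum_div, Finset.mul_sum]
    refine Finset.sum_congr rfl fun z hz => ?_
    have := term_eq hh hg hk0 hgh.symm hhk hz
    rw [hP, mul_comm (nd g), mul_comm (C (720 * (g:ℂ)) * (X ^ g + 1)), this]
    have e : z ^ k = z ^ g := by rw [hk, pow_add, ((mem_sr hh).1 hz).2, mul_one]
    rw [e, cot_sq (pow_ne_one_sr hh hgh.symm hz)]
    ring
  have s3 : ∑ z ∈ sr k, eval z P / ((z - 1) ^ (4+1) * (derivative (nd g * nd h * nd k)).eval z)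
      = 720^3 * (g * h * k) * (1/2) * (- (DD k h / k)) := by
    rw [DD, Finset.sum_div, ← Finset.sum_neg_distrib, Finset.mul_sum]
    refine Finset.sum_congr rfl fun z hz => ?_
    have := term_eq hk0 hg hh hgk.symm hhk.symm hz
    have r1 : nd g * nd h * nd k = nd k * nd g * nd h := by ring
    have r2 : P = (C (720 * (k:ℂ)) * (X ^ k + 1)) * (C (720 * (g:ℂ)) * (X ^ g + 1)) *
      (C (720 * (h:ℂ)) * (X ^ h + 1)) := by rw [hP]; ring
    rw [r1, r2, this]
    have e : z ^ g * z ^ h = 1 := by rw [← pow_add, ← hk]; exact ((mem_sr hk0).1 hz).2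
    have hx := pow_ne_one_sr hk0 hhk.symm hz
    have hg1 := pow_ne_one_sr hk0 hgk.symm hz
    have e2 : ((z^g+1)*(z^h+1))/((z^g-1)*(z^h-1)) = cc (z^h) - 1 := by
      rw [← neg_inj, ← cot_sq hx]
      generalize z ^ g = y at *
      generalize z ^ h = x at *
      have h1 : x - 1 ≠ 0 := sub_ne_zero.2 hx
      have h2 : y - 1 ≠ 0 := sub_ne_zero.2 hg1
      field_simp
      linear_combination (-2*(x+1))*e
    rw [e2]
    ring
  rw [s1, s2, s3] at hkey
  have q1 : (g:ℂ) ≠ 0 := by exact_mod_cast hg.ne'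
  have q2 : (h:ℂ) ≠ 0 := by exact_mod_cast hh.ne'
  have q3 : (k:ℂ) ≠ 0 := by exact_mod_cast hk0.ne'
  rw [eq_div_iff (by simp [q1, q2, q3])]
  linear_combination 2 * hkey

lemma DD_fib_succ (n : ℕ) : DD (Nat.fib (n+2)) (Nat.fib (n+1)) = DD (Nat.fib (n+2)) (Nat.fib (n+3)) := by
  rw [DD, DD]
  refine Finset.sum_congr rfl fun z hz => ?_
  have : 0 < Nat.fib (n+2) := Nat.fib_pos.2 (by omega)
  rw [Nat.fib_add_two (n := n+1), pow_add, ((mem_sr this).1 hz).2, mul_one]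

lemma cassini (n : ℕ) : (Nat.fib (n+1) : ℂ)^2 - Nat.fib (n+1) * Nat.fib n - (Nat.fib n)^2
    = (-1)^n := by
  induction n with
  | zero => simp
  | succ n ih =>
    rw [Nat.fib_add_two]; push_cast
    rw [pow_succ (-1 : ℂ), ← ih]; ring

lemma DD_closed (n : ℕ) : DD (Nat.fib (n+1)) (Nat.fib (n+2)) = 
    4 * (n+1) / 75 * Nat.fib (n+1) * (2 * Nat.fib (n+2) - Nat.fib (n+1))
      - 17/225 * (Nat.fib (n+1))^2 - 2/15 * (-1)^(n+1) - 1/9 - ((Nat.fib (n+1))^2 - 1)/3 := by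
  induction n using Nat.twoStepInduction with
  | zero => 
    have : sr 1 = ∅ := by rw [← Finset.card_eq_zero, card_sr one_pos, Nat.sub_self]
    norm_num [DD, this]
  | one => 
    have : sr 1 = ∅ := by rw [← Finset.card_eq_zero, card_sr one_pos, Nat.sub_self]
    norm_num [DD, this, Nat.fib_add_two]
  | more n h1 h2 =>
    have p1 : 0 < Nat.fib (n+1) := Nat.fib_pos.2 (by omega)
    have p2 : 0 < Nat.fib (n+2) := Nat.fib_pos.2 (by omega)
    have p3 : 0 < Nat.fib (n+3) := Nat.fib_pos.2 (by omega)
    have ht := three_term p1 p2 (Nat.fib_add_two (n := n+1)) (Nat.fib_coprime_fib_succ (n+1))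
    have hc := cassini (n+1)
    have hs := DD_fib_succ (n+1)
    simp only [Nat.add_assoc, Nat.reduceAdd] at *
    rw [hs, h1, h2] at ht
    have e3 : (Nat.fib (n+3) : ℂ) = Nat.fib (n+1) + Nat.fib (n+2) := by
      rw [Nat.fib_add_two (n := n+1)]; push_cast; rfl
    have e4 : (Nat.fib (n+4) : ℂ) = Nat.fib (n+2) + Nat.fib (n+3) := by
      rw [Nat.fib_add_two (n := n+2)]; push_cast; rfl
    have q1 : (Nat.fib (n+1) : ℂ) ≠ 0 := by exact_mod_cast p1.ne'
    have q2 : (Nat.fib (n+2) : ℂ) ≠ 0 := by exact_mod_cast p2.ne'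
    have q3 : (Nat.fib (n+3) : ℂ) ≠ 0 := by exact_mod_cast p3.ne'
    have hd : DD (Nat.fib (n+3)) (Nat.fib (n+4)) = Nat.fib (n+3) *
      (DD (Nat.fib (n+3)) (Nat.fib (n+4)) / Nat.fib (n+3)) := by field_simp
    rw [hd]
    generalize DD (Nat.fib (n+3)) (Nat.fib (n+4)) / Nat.fib (n+3) = Z at *
    rw [e4]
    have o1 : (-1:ℂ)^(n+2) = -(-1)^(n+1) := by ring
    have o2 : (-1:ℂ)^(n+3) = (-1)^(n+1) := by ring
    have hsq : ((Nat.fib (n+2) : ℂ)^2 - Nat.fib (n+2) * Nat.fib (n+1) - (Nat.fib (n+1))^2)^2 = 1 := by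
      rw [hc, ← pow_mul, mul_comm, pow_mul]; norm_num
    rw [o1] at ht
    rw [o2, ← hc]
    rw [← hc] at ht
    simp only [cv, ec] at ht
    push_cast at ht ⊢
    rw [sub_eq_iff_eq_add, ← sub_eq_iff_eq_add'] at ht
    rw [← ht]
    rw [e3] at q3 ⊢
    generalize (Nat.fib (n+1) : ℂ) = x at *
    generalize (Nat.fib (n+2) : ℂ) = y at *
    field_simp
    linear_combination (-170061120000000) * hsq

lemma sum_sr {a : ℕ} (ha : 0 < a) (f : ℂ → ℂ) : ∑ z ∈ sr a, f z =
    ∑ j ∈ Finset.Ico 1 a, f (Complex.exp (2 * π * Complex.I / a) ^ j) := by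
  have hp := Complex.isPrimitiveRoot_exp a ha.ne'
  symm
  refine Finset.sum_bij (fun j _ => Complex.exp (2 * π * Complex.I / a) ^ j) ?_ ?_ ?_ ?_
  · intro j hj
    rw [Finset.mem_Ico] at hj
    rw [mem_sr ha]
    refine ⟨hp.pow_ne_one_of_pos_of_lt (by omega) hj.2, ?_⟩
    rw [← pow_mul, mul_comm j a, pow_mul, hp.pow_eq_one, one_pow]
  · intro i hi j hj h
    rw [Finset.mem_Ico] at hi hj
    exact hp.pow_inj hi.2 hj.2 h
  · intro z hz
    obtain ⟨h1, h2⟩ := (mem_sr ha).1 hz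
    have : NeZero a := ⟨ha.ne'⟩
    obtain ⟨i, hi, rfl⟩ := hp.eq_pow_of_pow_eq_one h2
    refine ⟨i, ?_, rfl⟩
    rw [Finset.mem_Ico]
    refine ⟨?_, hi⟩
    rcases Nat.eq_zero_or_pos i with rfl | h
    · simp at h1
    · exact h
  · intro _ _; rfl

lemma cc_exp (t : ℂ) : cc (Complex.exp (2 * (t * Complex.I))) = 1 / Complex.sin t ^ 2 := by
  have h0 := Complex.exp_ne_zero (t * Complex.I)
  have hs : Complex.sin t ^ 2 = -(Complex.exp (t * Complex.I) ^ 2 - 1)^2 /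
      (4 * Complex.exp (t * Complex.I) ^ 2) := by
    rw [Complex.sin, neg_mul, Complex.exp_neg]
    have := Complex.I_sq
    field_simp
    rw [this]; ring
  rw [hs, cc, one_div_div, two_mul, Complex.exp_add, ← pow_two, div_neg, neg_mul, neg_div]

lemma lucas_fib (n : ℕ) : (lucas n : ℝ) = 2 * Nat.fib (n+1) - Nat.fib n := by
  induction n using Nat.twoStepInduction with
  | zero => simp [lucas]
  | one => simp [lucas]; norm_num
  | more n h1 h2 =>
    rw [lucas]; push_cast
    rw [h1, h2, Nat.fib_add_two (n := n+1), Nat.fib_add_two (n := n)]; push_cast; ring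

/-- Closed-form expression for the tensor product energy sum of the Fibonacci lattice. -/
theorem closed_form_sigma_two (n : ℕ) (hn : 2 ≤ n) :
    ∑ m ∈ Finset.Ico 1 (Nat.fib n),
        1 / (Real.sin (π * m / Nat.fib n) ^ 2 *
              Real.sin (π * Nat.fib (n - 1) * m / Nat.fib n) ^ 2)
      = (4 * (n : ℝ) / 75) * Nat.fib (2 * n) - (17 / 1125) * lucas (2 * n)
        - (-1 : ℝ) ^ n * (116 / 1125) - 1 / 9 := by
  obtain ⟨N, rfl⟩ : ∃ N, n = N + 2 := ⟨n - 2, by omega⟩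
  have hp : 0 < Nat.fib (N+2) := Nat.fib_pos.2 (by omega)
  have hD := DD_closed (N+1)
  have hC := cassini (N+2)
  have hf := DD_fib_succ N
  have hc := sum_cc hp
  simp only [Nat.add_assoc, Nat.reduceAdd] at *
  rw [← hf] at hD
  have hsum : ∑ z ∈ sr (Nat.fib (N+2)), cc z * cc (z ^ Nat.fib (N+1))
      = DD (Nat.fib (N+2)) (Nat.fib (N+1)) + ∑ z ∈ sr (Nat.fib (N+2)), cc z := by
    rw [DD, ← Finset.sum_add_distrib]
    exact Finset.sum_congr rfl fun z _ => by ring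
  rw [hD, hc, sum_sr hp] at hsum
  have hLc : ((lucas (2 * (N+2)) : ℕ) : ℂ) = 2 * Nat.fib (2*(N+2)+1) - Nat.fib (2*(N+2)) := by
    have := congrArg (Complex.ofReal) (lucas_fib (2*(N+2)))
    push_cast at this
    exact this
  have hF2 : (Nat.fib (2*(N+2)) : ℂ) = Nat.fib (N+2) * (2 * Nat.fib (N+3) - Nat.fib (N+2)) := by
    rw [Nat.fib_two_mul]
    have : Nat.fib (N+2) ≤ 2 * Nat.fib (N+2+1) := by
      have := Nat.fib_le_fib_succ (n := N+2); omega
    push_cast [Nat.cast_sub this]; ring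
  have hF3 : (Nat.fib (2*(N+2)+1) : ℂ) = Nat.fib (N+3)^2 + Nat.fib (N+2)^2 := by
    rw [Nat.fib_two_mul_add_one]; push_cast; ring
  apply Complex.ofReal_injective
  push_cast
  rw [hLc, hF3, hF2]
  have hlhs : ∀ m ∈ Finset.Ico 1 (Nat.fib (N+2)),
      1 / (Complex.sin (π * m / Nat.fib (N+2)) ^ 2 *
              Complex.sin (π * Nat.fib (N+1) * m / Nat.fib (N+2)) ^ 2) =
      cc (Complex.exp (2 * π * Complex.I / (Nat.fib (N+2) : ℕ)) ^ m) *
       cc ((Complex.exp (2 * π * Complex.I / (Nat.fib (N+2) : ℕ)) ^ m) ^ Nat.fib (N+1)) := by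
    intro m _
    rw [← pow_mul, ← Complex.exp_nat_mul, ← Complex.exp_nat_mul]
    have a1 : (m:ℂ) * (2 * π * Complex.I / (Nat.fib (N+2) : ℕ))
      = 2 * ((π * m / Nat.fib (N+2)) * Complex.I) := by ring
    have a2 : ((m * Nat.fib (N+1) : ℕ):ℂ) * (2 * π * Complex.I / (Nat.fib (N+2) : ℕ))
      = 2 * ((π * Nat.fib (N+1) * m / Nat.fib (N+2)) * Complex.I) := by push_cast; ring
    rw [a1, a2, cc_exp, cc_exp, ← one_div_mul_one_div]
  rw [Finset.sum_congr rfl hlhs, hsum]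
  push_cast
  rw [← hC]
  ring
end

section
/- For every positive integer i it holds that 1 + 1/((φ+2)i²) < φi/⌊φi⌋ and φi/(⌊φi⌋+1) ≤ 1 − 1/(2φ²i²). Equivalently, the fractional part satisfies {φi} > 1/(√5 i) and 1 − {φi} ≥ 1/(φ²i) · ((⌊φi⌋+1)/(2i)) — in particular {φi} > 1/(√5 i). -/
open Real

theorem phi_main (i : ℕ) (hi : 0 < i) (n : ℤ) (f : ℝ) (hn : (n : ℝ) = phi * i - f)
    (hf0 : 0 ≤ f) (hf1 : f < 1) :
    1 < f * (Real.sqrt 5 * i) ∧ (n : ℝ) + 1 ≤ (1 - f) * (2 * phi ^ 2 * (i : ℝ) ^ 2) := by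
  have h5 : Real.sqrt 5 = 2 * phi - 1 := by unfold phi; ring
  have hsq : phi ^ 2 = phi + 1 := by
    have := Real.sq_sqrt (show (0 : ℝ) ≤ 5 by norm_num)
    unfold phi; nlinarith
  have hp1 : 1.6 < phi := by
    have : (2.2 : ℝ) < Real.sqrt 5 := by
      apply Real.lt_sqrt_of_sq_lt; norm_num
    linarith
  have hp2 : phi < 1.65 := by nlinarith
  have hi1 : (1 : ℝ) ≤ i := by exact_mod_cast hi
  have hirr : Irrational phi := Real.goldenRatio_irrational
  have hfpos : 0 < f := by
    rcases hf0.lt_or_eq with h | h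
    · exact h
    · exfalso
      have h2 : Irrational (phi * (i : ℝ)) := hirr.mul_natCast (by omega)
      apply h2
      exact ⟨(n : ℚ), by push_cast; linarith⟩
  have e1 : (n : ℝ) ^ 2 - n * i - (i : ℝ) ^ 2 = -(f * ((2 * phi - 1) * i - f)) := by
    rw [hn]; linear_combination (i : ℝ) ^ 2 * hsq
  have e2 : ((n : ℝ) + 1) ^ 2 - (n + 1) * i - (i : ℝ) ^ 2
      = (1 - f) * ((2 * phi - 1) * i + (1 - f)) := by
    rw [hn]; linear_combination (i : ℝ) ^ 2 * hsq
  have p1 : 0 < f * ((2 * phi - 1) * i - f) := mul_pos hfpos (by nlinarith)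
  have p2 : 0 < (1 - f) * ((2 * phi - 1) * i + (1 - f)) := mul_pos (by linarith) (by nlinarith)
  have z1 : n ^ 2 - n * i - (i : ℤ) ^ 2 < 0 := by
    have : (n : ℝ) ^ 2 - n * i - (i : ℝ) ^ 2 < 0 := by linarith
    exact_mod_cast this
  have z2 : 0 < (n + 1) ^ 2 - (n + 1) * i - (i : ℤ) ^ 2 := by
    have : 0 < ((n : ℝ) + 1) ^ 2 - (n + 1) * i - (i : ℝ) ^ 2 := by linarith
    exact_mod_cast this
  have r1 : (n : ℝ) ^ 2 - n * i - (i : ℝ) ^ 2 ≤ -1 := by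
    have : n ^ 2 - n * i - (i : ℤ) ^ 2 ≤ -1 := by omega
    exact_mod_cast this
  have r2 : 1 ≤ ((n : ℝ) + 1) ^ 2 - (n + 1) * i - (i : ℝ) ^ 2 := by
    have : 1 ≤ (n + 1) ^ 2 - (n + 1) * i - (i : ℤ) ^ 2 := by omega
    exact_mod_cast this
  refine ⟨by rw [h5]; nlinarith, ?_⟩
  rcases Nat.lt_or_ge 1 i with h | h
  · have hi2 : (2 : ℝ) ≤ i := by exact_mod_cast h
    have a1 : 1 ≤ (1 - f) * ((2 * phi - 1) * i + 1) := by nlinarith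
    have a2 : phi * i * ((2 * phi - 1) * i + 1) ≤ 2 * phi ^ 2 * (i : ℝ) ^ 2 - 1 := by
      have : 0 ≤ phi * ((i : ℝ) * (i - 1)) - 1 := by nlinarith
      have e : 2 * phi ^ 2 * (i : ℝ) ^ 2 - 1 - phi * i * ((2 * phi - 1) * i + 1)
        = phi * ((i : ℝ) * (i - 1)) - 1 := by ring
      linarith
    have a3 : phi * i * 1 ≤ phi * i * ((1 - f) * ((2 * phi - 1) * i + 1)) :=
      mul_le_mul_of_nonneg_left a1 (by positivity)
    have a4 := mul_le_mul_of_nonneg_left a2 (show 0 ≤ 1 - f by linarith)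
    nlinarith
  · have hi' : i = 1 := by omega
    subst hi'
    simp only [Nat.cast_one, mul_one] at *
    have l : (0 : ℝ) < n := by linarith
    have u : (n : ℝ) < 2 := by linarith
    have l' : 0 < n := by exact_mod_cast l
    have u' : n < 2 := by exact_mod_cast u
    have : n = 1 := by omega
    subst this
    push_cast at *
    have : f = phi - 1 := by linarith
    subst this
    nlinarith

/-- Rational approximation properties of the golden ratio:
`1 + 1/((φ+2)i²) < φi/⌊φi⌋`, `φi/(⌊φi⌋+1) ≤ 1 − 1/(2φ²i²)`, and equivalently
`{φi} > 1/(√5·i)` and `1 − {φi} ≥ (1/(φ²i))·((⌊φi⌋+1)/(2i))`. -/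
theorem golden_rational_approx (i : ℕ) (hi : 0 < i) :
    1 + 1 / ((phi + 2) * (i : ℝ) ^ 2) < phi * i / (⌊phi * (i : ℝ)⌋ : ℝ) ∧
      phi * i / ((⌊phi * (i : ℝ)⌋ : ℝ) + 1) ≤ 1 - 1 / (2 * phi ^ 2 * (i : ℝ) ^ 2) ∧
      1 / (Real.sqrt 5 * i) < Int.fract (phi * (i : ℝ)) ∧
      1 / (phi ^ 2 * i) * (((⌊phi * (i : ℝ)⌋ : ℝ) + 1) / (2 * i))
        ≤ 1 - Int.fract (phi * (i : ℝ)) := by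
  have hn : ((⌊phi * (i : ℝ)⌋ : ℤ) : ℝ) = phi * i - Int.fract (phi * (i : ℝ)) := by
    have := Int.floor_add_fract (phi * (i : ℝ)); linarith
  have hf0 := Int.fract_nonneg (phi * (i : ℝ))
  have hf1 := Int.fract_lt_one (phi * (i : ℝ))
  obtain ⟨A, B⟩ := phi_main i hi _ _ hn hf0 hf1
  have hp1 : 1 < phi := Real.one_lt_goldenRatio
  have hi1 : (1 : ℝ) ≤ i := by exact_mod_cast hi
  have hn1 : (1 : ℝ) ≤ (⌊phi * (i : ℝ)⌋ : ℤ) := by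
    have : 1 ≤ ⌊phi * (i : ℝ)⌋ := by
      rw [Int.le_floor]; push_cast; nlinarith
    exact_mod_cast this
  have h5 : (phi + 2) = Real.sqrt 5 * phi := by
    have := Real.sq_sqrt (show (0 : ℝ) ≤ 5 by norm_num)
    unfold phi; nlinarith
  have h5p : 0 < Real.sqrt 5 := by positivity
  generalize Int.fract (phi * (i : ℝ)) = f at *
  generalize ((⌊phi * (i : ℝ)⌋ : ℤ) : ℝ) = n at *
  have hp0 : 0 < phi := by linarith
  have hi0 : (0 : ℝ) < i := by linarith
  have hD : 0 < 2 * phi ^ 2 * (i : ℝ) ^ 2 := by positivity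
  refine ⟨?_, ?_, ?_, ?_⟩
  · have e : phi * i / n = 1 + f / n := by
      have : n ≠ 0 := by linarith
      field_simp; linarith
    rw [e, h5]
    have : 1 / (Real.sqrt 5 * phi * (i : ℝ) ^ 2) < f / n := by
      rw [div_lt_div_iff₀ (by positivity) (by linarith)]
      have h := mul_lt_mul_of_pos_right A (show 0 < phi * i by positivity)
      nlinarith
    linarith
  · have e : phi * i / (n + 1) = 1 - (1 - f) / (n + 1) := by
      have : n + 1 ≠ 0 := by linarith
      field_simp; linarith
    rw [e]
    have : 1 / (2 * phi ^ 2 * (i : ℝ) ^ 2) ≤ (1 - f) / (n + 1) := by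
      rw [div_le_div_iff₀ hD (by linarith)]
      linarith
    linarith
  · rw [div_lt_iff₀ (by positivity)]; exact A
  · have e : 1 / (phi ^ 2 * i) * ((n + 1) / (2 * i)) = (n + 1) / (2 * phi ^ 2 * (i : ℝ) ^ 2) := by
      field_simp
    rw [e, div_le_iff₀ hD]; exact B
end
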